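/- Let n ∈ ℕ, A an n×n real matrix, v ∈ ℝⁿ, d_k the determinants of the path-extended matrices M_k, and B_0 the bordered matrix with corner entry 0. Then for every integer D ≥ 3: d_{D−2} = 0 if and only if det B_0 = −((D−1)/(D−2))·det A. (This is the determinant criterion underlying Theorem 1 of the paper: the Kac–Moody algebra obtained by appending D−2 nodes is affine precisely when the Borcherds–Kac–Moody Cartan matrix B_0 satisfies det B_0 = −((D−1)/(D−2))·det A.) -/

import Mathlib

/-- The path-extended matrix `M_k`: the top-left `n × n` block is `A`; the first
appended index is coupled to the original indices by `v`; appended diagonal entries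
are `2`; consecutive appended indices are coupled by `-1`; all other new entries
vanish.  For `k = 0` this is just `A` (reindexed along `Fin (n + 0)`). -/
def pathExt (n : ℕ) (A : Matrix (Fin n) (Fin n) ℝ) (v : Fin n → ℝ) (k : ℕ) :
    Matrix (Fin (n + k)) (Fin (n + k)) ℝ :=
  Matrix.of fun i j =>
    if hi : (i : ℕ) < n then
      if hj : (j : ℕ) < n then A ⟨i, hi⟩ ⟨j, hj⟩
      else if (j : ℕ) = n then v ⟨i, hi⟩ else 0
    else
      if hj : (j : ℕ) < n then
        if (i : ℕ) = n then v ⟨j, hj⟩ else 0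
      else
        if (i : ℕ) = (j : ℕ) then 2
        else if (i : ℕ) + 1 = (j : ℕ) ∨ (j : ℕ) + 1 = (i : ℕ) then -1
        else 0

/-- The determinants `d_k = det M_k` of the path-extended matrices. -/
def pathDet (n : ℕ) (A : Matrix (Fin n) (Fin n) ℝ) (v : Fin n → ℝ) (k : ℕ) : ℝ :=
  (pathExt n A v k).det

/-- The bordered matrix `B_a`: top-left `n × n` block is `A`, the last row and
column off the corner are given by `v`, and the bottom-right corner entry is `a`.
`B_0` is the Cartan matrix of the Borcherds–Kac–Moody superalgebra. -/
def bordered (n : ℕ) (A : Matrix (Fin n) (Fin n) ℝ) (v : Fin n → ℝ) (a : ℝ) :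
    Matrix (Fin (n + 1)) (Fin (n + 1)) ℝ :=
  Matrix.of fun i j =>
    if hi : (i : ℕ) < n then
      if hj : (j : ℕ) < n then A ⟨i, hi⟩ ⟨j, hj⟩ else v ⟨i, hi⟩
    else
      if hj : (j : ℕ) < n then v ⟨j, hj⟩ else a


theorem aux_corner (m : ℕ) (M N : Matrix (Fin (m+1)) (Fin (m+1)) ℝ)
    (h : ∀ i j, ¬ (i = Fin.last m ∧ j = Fin.last m) → M i j = N i j) :
    M.det = N.det + (M (Fin.last m) (Fin.last m) - N (Fin.last m) (Fin.last m)) *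
      (M.submatrix Fin.castSucc Fin.castSucc).det := by
  have hs : ∀ j : Fin (m+1), M.submatrix (Fin.last m).succAbove j.succAbove
      = N.submatrix (Fin.last m).succAbove j.succAbove := by
    intro j
    ext a b
    simp only [Matrix.submatrix_apply, Fin.succAbove_last]
    exact h _ _ (fun hh => (Fin.castSucc_lt_last a).ne hh.1)
  have hl : ∀ j : Fin m, M (Fin.last m) j.castSucc = N (Fin.last m) j.castSucc := fun j =>
    h _ _ (fun hh => (Fin.castSucc_lt_last j).ne hh.2)
  rw [Matrix.det_succ_row M (Fin.last m), Matrix.det_succ_row N (Fin.last m),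
    Fin.sum_univ_castSucc, Fin.sum_univ_castSucc]
  simp only [← hs, hl]
  have e : ((-1 : ℝ)) ^ (((Fin.last m : Fin (m+1)) : ℕ) + ((Fin.last m : Fin (m+1)) : ℕ)) = 1 :=
    Even.neg_one_pow ⟨_, rfl⟩
  rw [e, Fin.succAbove_last]
  ring

theorem aux_tri (m : ℕ) (M : Matrix (Fin (m+2)) (Fin (m+2)) ℝ)
    (hr : ∀ j : Fin m, M (Fin.last _) j.castSucc.castSucc = 0)
    (hc : ∀ j : Fin m, M j.castSucc.castSucc (Fin.last _) = 0) :
    M.det = M (Fin.last _) (Fin.last _) * (M.submatrix Fin.castSucc Fin.castSucc).det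
      - M (Fin.last _) (Fin.last m).castSucc * M (Fin.last m).castSucc (Fin.last _) *
        (M.submatrix (fun i : Fin m => i.castSucc.castSucc)
          (fun i : Fin m => i.castSucc.castSucc)).det := by
  have h2 : (M.submatrix (Fin.last (m+1)).succAbove (Fin.last m).castSucc.succAbove).det
      = M (Fin.last m).castSucc (Fin.last _) *
        (M.submatrix (fun i : Fin m => i.castSucc.castSucc)
          (fun i : Fin m => i.castSucc.castSucc)).det := by
    rw [Matrix.det_succ_column _ (Fin.last m), Fin.sum_univ_castSucc]
    have e : ((-1 : ℝ)) ^ (((Fin.last m : Fin (m+1)) : ℕ) + ((Fin.last m : Fin (m+1)) : ℕ)) = 1 :=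
      Even.neg_one_pow ⟨_, rfl⟩
    have q : (Fin.last m).castSucc.succAbove (Fin.last m) = Fin.last (m+1) := by
      simp [Fin.succAbove]
    have q2 : ∀ j : Fin m, (Fin.last m).castSucc.succAbove j.castSucc = j.castSucc.castSucc := by
      intro j
      exact Fin.succAbove_of_castSucc_lt _ _ (by simp [Fin.lt_def])
    rw [e]
    simp only [Matrix.submatrix_apply, Fin.succAbove_last, q, hc, Matrix.submatrix_submatrix]
    simp only [mul_zero, zero_mul, Finset.sum_const_zero, zero_add, one_mul]
    congr 2
    ext a b
    simp [q2]
  rw [Matrix.det_succ_row M (Fin.last _), Fin.sum_univ_castSucc, Fin.sum_univ_castSucc, h2]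
  have e : ((-1 : ℝ)) ^ (((Fin.last (m+1) : Fin (m+2)) : ℕ) + ((Fin.last (m+1) : Fin (m+2)) : ℕ)) = 1 :=
    Even.neg_one_pow ⟨_, rfl⟩
  have e' : ((-1 : ℝ)) ^ (((Fin.last (m+1) : Fin (m+2)) : ℕ) + (((Fin.last m).castSucc : Fin (m+2)) : ℕ)) = -1 :=
    Odd.neg_one_pow ⟨m, by simp; ring⟩
  rw [e, e', Fin.succAbove_last]
  simp only [hr, mul_zero, zero_mul, Finset.sum_const_zero]
  ring

theorem aux_zero (n : ℕ) (A : Matrix (Fin n) (Fin n) ℝ) (v : Fin n → ℝ) :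
    pathDet n A v 0 = A.det := by
  unfold pathDet
  congr 1
  ext i j
  simp [pathExt]

theorem aux_one (n : ℕ) (A : Matrix (Fin n) (Fin n) ℝ) (v : Fin n → ℝ) :
    pathDet n A v 1 = (bordered n A v 0).det + 2 * A.det := by
  unfold pathDet
  rw [aux_corner n (pathExt n A v 1) (bordered n A v 0)]
  · have : (pathExt n A v 1).submatrix Fin.castSucc Fin.castSucc = A := by
      ext i j
      simp [pathExt]
    rw [this]
    simp [pathExt, bordered]
  · intro i j h
    have hi := i.2
    have hj := j.2
    simp only [Fin.ext_iff, Fin.val_last] at h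
    simp only [pathExt, bordered, Matrix.of_apply]
    split_ifs <;> first | rfl | omega

theorem aux_rec (n : ℕ) (A : Matrix (Fin n) (Fin n) ℝ) (v : Fin n → ℝ) (k : ℕ) :
    pathDet n A v (k+2) = 2 * pathDet n A v (k+1) - pathDet n A v k := by
  unfold pathDet
  rw [aux_tri (n+k) (pathExt n A v (k+2))]
  · have a : (pathExt n A v (k+2)).submatrix Fin.castSucc Fin.castSucc = pathExt n A v (k+1) := by
      ext i j
      simp [pathExt]
    have b : (pathExt n A v (k+2)).submatrix (fun i : Fin (n+k) => i.castSucc.castSucc)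
          (fun i : Fin (n+k) => i.castSucc.castSucc) = pathExt n A v k := by
      ext i j
      simp [pathExt]
    have c1 : pathExt n A v (k+2) (Fin.last (n+k+1)) (Fin.last (n+k+1)) = 2 := by
      simp only [pathExt, Matrix.of_apply, Fin.val_last]
      split_ifs <;> first | rfl | omega
    have c2 : pathExt n A v (k+2) (Fin.last (n+k+1)) (Fin.last (n+k)).castSucc = -1 := by
      have hg : ∀ i j : Fin (n+(k+2)), (i : ℕ) = n+k+1 → (j : ℕ) = n+k →
          pathExt n A v (k+2) i j = -1 := by
        intro i j hi hj
        simp only [pathExt, Matrix.of_apply]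
        rw [dif_neg (by omega), dif_neg (by omega), if_neg (by omega), if_pos (by omega)]
      exact hg _ _ rfl rfl
    have c3 : pathExt n A v (k+2) (Fin.last (n+k)).castSucc (Fin.last (n+k+1)) = -1 := by
      have hg : ∀ i j : Fin (n+(k+2)), (i : ℕ) = n+k → (j : ℕ) = n+k+1 →
          pathExt n A v (k+2) i j = -1 := by
        intro i j hi hj
        simp only [pathExt, Matrix.of_apply]
        rw [dif_neg (by omega), dif_neg (by omega), if_neg (by omega), if_pos (by omega)]
      exact hg _ _ rfl rfl
    rw [a, b, c1, c2, c3]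
    simp only [mul_neg, mul_one, neg_neg, one_mul]
  · intro j
    have := j.2
    simp only [pathExt, Matrix.of_apply, Fin.val_last, Fin.val_castSucc]
    split_ifs <;> first | rfl | omega
  · intro j
    have := j.2
    simp only [pathExt, Matrix.of_apply, Fin.val_last, Fin.val_castSucc]
    split_ifs <;> first | rfl | omega

theorem aux_formula (n : ℕ) (A : Matrix (Fin n) (Fin n) ℝ) (v : Fin n → ℝ) (k : ℕ) :
    pathDet n A v k = A.det + k * ((bordered n A v 0).det + A.det) := by
  induction k using Nat.twoStepInduction with
  | zero => simp [aux_zero]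
  | one => rw [aux_one]; push_cast; ring
  | more k h1 h2 => rw [aux_rec, h1, h2]; push_cast; ring

/-- for every integer `D ≥ 3`, the determinant of the path-extended
Cartan matrix with `D - 2` appended nodes vanishes (i.e. the extended Kac–Moody
algebra is affine) if and only if the Borcherds–Kac–Moody Cartan matrix satisfies
`det B_0 = -((D-1)/(D-2)) · det A`. -/
theorem pathDet_eq_zero_iff (n : ℕ) (A : Matrix (Fin n) (Fin n) ℝ) (v : Fin n → ℝ) :
    ∀ D : ℕ, 3 ≤ D →
      (pathDet n A v (D - 2) = 0 ↔
        (bordered n A v 0).det = -(((D : ℝ) - 1) / ((D : ℝ) - 2)) * A.det) := by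
  intro D hD
  obtain ⟨k, rfl⟩ : ∃ k, D = k + 3 := ⟨D - 3, by omega⟩
  have e : k + 3 - 2 = k + 1 := by omega
  rw [e, aux_formula]
  have hk : ((k : ℝ) + 1) ≠ 0 := by positivity
  have e1 : ((k + 3 : ℕ) : ℝ) - 2 = (k : ℝ) + 1 := by push_cast; ring
  have e2 : ((k + 3 : ℕ) : ℝ) - 1 = (k : ℝ) + 2 := by push_cast; ring
  rw [e1, e2, neg_mul, div_mul_eq_mul_div, ← neg_div, eq_div_iff hk]
  push_cast
  constructor <;> intro h <;> linarith
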